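/- The sharp constant 𝒞⁺(∞) satisfies 𝒞⁺(∞) < 6/5; equivalently, there is a constant K < 6/5 such that every even continuous F : ℝ → ℝ with F ∈ L¹(ℝ) and F̂(t) ≤ 0 for all |t| ≥ 1 satisfies F(0) ≤ K·‖F‖₁. -/

import Mathlib

open MeasureTheory Filter
open scoped FourierTransform Real

/-- The class 𝒜 sharp constant 𝒞(A). -/
noncomputable def Ccal (A : ℝ) : ℝ :=
  sSup { r : ℝ | ∃ F : ℝ → ℂ, Continuous F ∧ Integrable F ∧ F ≠ 0 ∧
    r = (‖F 0‖ - A * ∫ t in {t : ℝ | 1 ≤ |t|}, ‖𝓕 F t‖) / ∫ x : ℝ, ‖F x‖ }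

/-- 𝒞(∞), over the bandlimited class ℰ. -/
noncomputable def CcalInf : ℝ :=
  sSup { r : ℝ | ∃ F : ℝ → ℂ, Continuous F ∧ Integrable F ∧ F ≠ 0 ∧
    Function.support (𝓕 F) ⊆ Set.Icc (-1 : ℝ) 1 ∧
    r = ‖F 0‖ / ∫ x : ℝ, ‖F x‖ }

/-- Fourier transform of a real-valued function, as a real number (its real part). -/
noncomputable def FTr (F : ℝ → ℝ) (t : ℝ) : ℝ := (𝓕 (fun x => (F x : ℂ)) t).re

/-- The class 𝒜⁺ sharp constant 𝒞⁺(A). -/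
noncomputable def CcalPlus (A : ℝ) : ℝ :=
  sSup { r : ℝ | ∃ F : ℝ → ℝ, Continuous F ∧ Integrable F ∧ F ≠ 0 ∧ (∀ x, F (-x) = F x) ∧
    r = (F 0 - A * ∫ t in {t : ℝ | 1 ≤ |t|}, max (FTr F t) 0) / ∫ x : ℝ, |F x| }

/-- 𝒞⁺(∞), over the class ℰ⁺. -/
noncomputable def CcalPlusInf : ℝ :=
  sSup { r : ℝ | ∃ F : ℝ → ℝ, Continuous F ∧ Integrable F ∧ F ≠ 0 ∧ (∀ x, F (-x) = F x) ∧
    (∀ t : ℝ, 1 ≤ |t| → FTr F t ≤ 0) ∧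
    r = F 0 / ∫ x : ℝ, |F x| }

/-- The prime counting function at a real argument. -/
noncomputable def primePi (x : ℝ) : ℕ := Nat.primeCounting ⌊x⌋₊

/-- The Brun–Titchmarsh constant 𝐁. -/
noncomputable def BrunTitchmarsh : ℝ :=
  limsup (fun x : ℝ =>
    ((primePi (x + Real.sqrt x) : ℝ) - (primePi x : ℝ)) / (Real.sqrt x / Real.log x)) atTop

/-!
The bound is linear programming duality. Let `ν` be the signed measure with density `1` on
`[-1, 1]`, density `1 / 10` on the rest of `[-2, 2]`, and point masses `-51 / 100` at `±1`.
As `f̂` has nonpositive real part off `(-1, 1)`, Fourier inversion gives, for real parts,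
`f(0) = ∫ f̂ ≤ ∫ f̂ dν = ∫ f ν̂ ≤ ‖ν̂‖_∞ ‖f‖₁`.
The weights were chosen numerically so that `‖ν̂‖_∞ ≤ 119 / 100`. For `|u| ≤ π`, where
`u = 2πx`, the upper bound follows from the Cusa–Huygens inequality `sinc v ≤ (2 + cos v) / 3`;
for `|u| ≥ π`, `ν̂` has the form `a sin u - b cos u` and is at most `√(a² + b²)`.
Since `f̂` need not be integrable, the inversion is carried out with Gaussian means.
-/

section Trigonometry

lemma sinc_two_mul (x : ℝ) : Real.sinc (2 * x) = Real.sinc x * Real.cos x := by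
  rcases eq_or_ne x 0 with rfl | hx
  · simp
  rw [Real.sinc_of_ne_zero hx, Real.sinc_of_ne_zero (mul_ne_zero two_ne_zero hx),
    Real.sin_two_mul]
  field_simp

lemma sinc_nonneg_of_abs_le_pi {x : ℝ} (hx : |x| ≤ π) : 0 ≤ Real.sinc x := by
  wlog h₀ : 0 ≤ x generalizing x
  · simpa using this (by rwa [abs_neg]) (neg_nonneg.2 (le_of_not_ge h₀))
  rcases h₀.eq_or_lt with rfl | hpos
  · simp
  rw [Real.sinc_of_ne_zero hpos.ne']
  exact div_nonneg (Real.sin_nonneg_of_nonneg_of_le_pi h₀ ((le_abs_self x).trans hx)) h₀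

lemma mul_cos_le_sin {x : ℝ} (h₀ : 0 ≤ x) (hπ : x ≤ π) : x * Real.cos x ≤ Real.sin x := by
  rcases lt_or_ge x (π / 2) with h | h
  · have hcos : 0 < Real.cos x := Real.cos_pos_of_mem_Ioo ⟨by linarith [Real.pi_pos], h⟩
    rw [← le_div_iff₀ hcos, ← Real.tan_eq_sin_div_cos]
    exact Real.le_tan h₀ h
  · exact (mul_nonpos_of_nonneg_of_nonpos h₀
      (Real.cos_nonpos_of_pi_div_two_le_of_le h (by linarith))).trans
      (Real.sin_nonneg_of_nonneg_of_le_pi h₀ hπ)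

lemma three_mul_sin_le_mul_two_add_cos {x : ℝ} (h₀ : 0 ≤ x) (hπ : x ≤ π) :
    3 * Real.sin x ≤ x * (2 + Real.cos x) := by
  let g : ℝ → ℝ := fun y => y * (2 + Real.cos y) - 3 * Real.sin y
  have hderiv (y : ℝ) : HasDerivAt g
      (4 * Real.sin (y / 2) * (Real.sin (y / 2) - y / 2 * Real.cos (y / 2))) y := by
    refine (((hasDerivAt_id y).mul ((Real.hasDerivAt_cos y).const_add 2)).sub
      ((Real.hasDerivAt_sin y).const_mul 3)).congr_deriv ?_
    have hcos : Real.cos y = 1 - 2 * Real.sin (y / 2) ^ 2 := by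
      rw [← Real.cos_two_mul_eq_one_sub, mul_div_cancel₀ y two_ne_zero]
    have hsin : Real.sin y = 2 * Real.sin (y / 2) * Real.cos (y / 2) := by
      rw [← Real.sin_two_mul, mul_div_cancel₀ y two_ne_zero]
    rw [hcos, hsin, id]
    ring
  have hmono : MonotoneOn g (Set.Icc 0 π) := by
    refine monotoneOn_of_hasDerivWithinAt_nonneg (convex_Icc 0 π)
      (fun y _ => (hderiv y).continuousAt.continuousWithinAt)
      (fun y _ => (hderiv y).hasDerivWithinAt) fun y hy => ?_
    obtain ⟨hy₀, hyπ⟩ := interior_subset hy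
    have hsin : 0 ≤ Real.sin (y / 2) :=
      Real.sin_nonneg_of_nonneg_of_le_pi (by linarith) (by linarith)
    have htan : y / 2 * Real.cos (y / 2) ≤ Real.sin (y / 2) :=
      mul_cos_le_sin (by linarith) (by linarith)
    exact mul_nonneg (by positivity) (sub_nonneg.2 htan)
  simpa [g] using hmono ⟨le_rfl, Real.pi_nonneg⟩ ⟨h₀, hπ⟩ h₀

lemma sinc_le_two_add_cos_div_three (x : ℝ) : Real.sinc x ≤ (2 + Real.cos x) / 3 := by
  wlog h₀ : 0 ≤ x generalizing x
  · simpa using this (-x) (neg_nonneg.2 (le_of_not_ge h₀))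
  rcases h₀.eq_or_lt with rfl | hpos
  · norm_num
  rw [Real.sinc_of_ne_zero hpos.ne', div_le_div_iff₀ hpos three_pos]
  rcases le_total x π with hπ | hπ
  · linarith [three_mul_sin_le_mul_two_add_cos h₀ hπ]
  · nlinarith [Real.sin_le_one x, Real.neg_one_le_cos x, Real.pi_gt_three]

end Trigonometry

section DualKernel

/-- The density part of the dual certificate: it equals `1` on `[-1, 1]` and `1 / 10` on the rest
of `[-2, 2]`. -/
noncomputable def stepWeight : ℝ → ℂ :=
  (9 / 10 : ℂ) • (Set.Icc (-1) 1).indicator (fun _ => 1) +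
    (1 / 10 : ℂ) • (Set.Icc (-2) 2).indicator (fun _ => 1)

/-- The Fourier transform, in the variable `u = 2πx`, of the dual certificate: the signed measure
with density `stepWeight` and point masses `-51 / 100` at `±1`. -/
noncomputable def dualKernel (u : ℝ) : ℝ :=
  2 * Real.sinc u * (9 / 10 + 1 / 5 * Real.cos u) - 51 / 50 * Real.cos u

lemma dualKernel_quartic_le {c : ℝ} (h₀ : 0 ≤ c) (h₁ : c ≤ 1) :
    2 * ((2 + c) / 3) * (c * (7 / 10 + 2 / 5 * c ^ 2)) - 51 / 50 * (2 * c ^ 2 - 1) ≤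
      119 / 100 := by
  have hc : 0 ≤ 1 - c := sub_nonneg.2 h₁
  have hmain : 0 ≤ (1 - c) * (15 + 4 * c) * (5 * c - 2) ^ 2 :=
    mul_nonneg (mul_nonneg hc (by positivity)) (sq_nonneg _)
  have hcubic : 0 ≤ 5 * c ^ 2 * (1 - c) := mul_nonneg (by positivity) hc
  linarith [sq_nonneg (c - 1 / 2)]

lemma dualKernel_le_of_abs_le_pi {u : ℝ} (hu : |u| ≤ π) : dualKernel u ≤ 119 / 100 := by
  -- Halving the angle sharpens Cusa–Huygens and leaves a quartic in `cos v` on `[0, 1]`.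
  obtain ⟨v, rfl⟩ : ∃ v, u = 2 * v := ⟨u / 2, by ring⟩
  rw [abs_mul, abs_two] at hu
  obtain ⟨hv₁, hv₂⟩ := abs_le.1 (show |v| ≤ π / 2 by linarith)
  have hc₀ : 0 ≤ Real.cos v := Real.cos_nonneg_of_mem_Icc ⟨hv₁, hv₂⟩
  calc dualKernel (2 * v)
      = 2 * Real.sinc v * (Real.cos v * (7 / 10 + 2 / 5 * Real.cos v ^ 2)) -
          51 / 50 * (2 * Real.cos v ^ 2 - 1) := by
        rw [dualKernel, sinc_two_mul, Real.cos_two_mul]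
        ring
    _ ≤ 2 * ((2 + Real.cos v) / 3) * (Real.cos v * (7 / 10 + 2 / 5 * Real.cos v ^ 2)) -
          51 / 50 * (2 * Real.cos v ^ 2 - 1) := by
        gcongr
        exact sinc_le_two_add_cos_div_three v
    _ ≤ 119 / 100 := dualKernel_quartic_le hc₀ (Real.cos_le_one v)

lemma neg_le_dualKernel_of_abs_le_pi {u : ℝ} (hu : |u| ≤ π) : -(119 / 100) ≤ dualKernel u := by
  have hcos := Real.neg_one_le_cos u
  have hcos' := Real.cos_le_one u
  have : 0 ≤ 2 * Real.sinc u * (9 / 10 + 1 / 5 * Real.cos u) :=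
    mul_nonneg (mul_nonneg two_pos.le (sinc_nonneg_of_abs_le_pi hu)) (by linarith)
  rw [dualKernel]
  linarith

lemma abs_mul_sin_sub_mul_cos_le (a b x : ℝ) :
    |a * Real.sin x - b * Real.cos x| ≤ √(a ^ 2 + b ^ 2) := by
  refine Real.abs_le_sqrt ?_
  nlinarith [sq_nonneg (a * Real.cos x + b * Real.sin x), Real.sin_sq_add_cos_sq x]

lemma abs_dualKernel_le_of_pi_le {u : ℝ} (hu : π ≤ u) : |dualKernel u| ≤ 119 / 100 := by
  have hπ := Real.pi_gt_d2
  have hu₀ : 0 < u := Real.pi_pos.trans_le hu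
  set a : ℝ := 2 * (9 / 10 + 1 / 5 * Real.cos u) / u with ha
  have ha₀ : 0 ≤ a := by
    have := Real.neg_one_le_cos u
    exact div_nonneg (by linarith) hu₀.le
  have ha₁ : a ≤ 3 / 5 := by
    have hlip : Real.cos u - Real.cos π ≤ u - π :=
      (le_abs_self _).trans ((Real.abs_cos_sub_cos_le u π).trans_eq (abs_of_nonneg (by linarith)))
    rw [Real.cos_pi] at hlip
    rw [ha, div_le_iff₀ hu₀]
    linarith
  calc |dualKernel u| = |a * Real.sin u - 51 / 50 * Real.cos u| := by
        rw [dualKernel, Real.sinc_of_ne_zero hu₀.ne', ha]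
        ring_nf
    _ ≤ √(a ^ 2 + (51 / 50) ^ 2) := abs_mul_sin_sub_mul_cos_le a (51 / 50) u
    _ ≤ 119 / 100 := by
        rw [Real.sqrt_le_left (by norm_num)]
        nlinarith

lemma dualKernel_abs (u : ℝ) : dualKernel |u| = dualKernel u := by
  rcases abs_choice u with h | h <;> simp [h, dualKernel]

lemma abs_dualKernel_le (u : ℝ) : |dualKernel u| ≤ 119 / 100 := by
  rcases le_total |u| π with hu | hu
  · exact abs_le.2 ⟨neg_le_dualKernel_of_abs_le_pi hu, dualKernel_le_of_abs_le_pi hu⟩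
  · simpa only [dualKernel_abs] using abs_dualKernel_le_of_pi_le hu

end DualKernel

section Fourier

lemma cexp_neg_inv_mul_sq_eq_ofReal (c r : ℝ) :
    Complex.exp (-(c⁻¹ : ℝ) * r ^ 2) = (Real.exp (-c⁻¹ * r ^ 2) : ℝ) := by
  push_cast
  rfl

variable {V E : Type*} [NormedAddCommGroup V] [InnerProductSpace ℝ V] [MeasurableSpace V]
  [BorelSpace V] [FiniteDimensional ℝ V] [NormedAddCommGroup E] [NormedSpace ℂ E]

lemma integral_fourier_smul_eq_flip [CompleteSpace E] {f : V → ℂ} {g : V → E} (hf : Integrable f)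
    (hg : Integrable g) : ∫ t, 𝓕 f t • g t = ∫ x, f x • 𝓕 g x := by
  simpa using! VectorFourier.integral_fourierIntegral_smul_eq_flip (L := innerₗ V)
    Real.continuous_fourierChar continuous_inner hf hg

lemma norm_fourier_le_integral_norm (f : V → E) (t : V) : ‖𝓕 f t‖ ≤ ∫ x, ‖f x‖ :=
  VectorFourier.norm_fourierIntegral_le_integral_norm Real.fourierChar volume (innerₗ V) f t

lemma continuous_fourier_of_integrable {f : V → E} (hf : Integrable f) : Continuous (𝓕 f) :=
  VectorFourier.fourierIntegral_continuous Real.continuous_fourierChar (L := innerₗ V)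
    continuous_inner hf

lemma fourier_add_of_integrable {f g : V → E} (hf : Integrable f) (hg : Integrable g) :
    𝓕 (f + g) = 𝓕 f + 𝓕 g :=
  VectorFourier.fourierIntegral_add Real.continuous_fourierChar (L := innerₗ V)
    continuous_inner hf hg

lemma fourier_const_smul (c : ℂ) (f : V → E) : 𝓕 (c • f) = c • 𝓕 f :=
  VectorFourier.fourierIntegral_const_smul Real.fourierChar volume (innerₗ V) f c

lemma integrable_mul_fourier {f w : V → ℂ} (hf : Integrable f) (hw : Integrable w) :
    Integrable fun t => w t * 𝓕 f t :=
  hw.mul_bdd (continuous_fourier_of_integrable hf).aestronglyMeasurable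
    (ae_of_all _ (norm_fourier_le_integral_norm f))

lemma integrable_cexp_neg_inv_mul_sq_norm {c : ℝ} (hc : 0 < c) :
    Integrable fun v : V => Complex.exp (-(c⁻¹ : ℝ) * ‖v‖ ^ 2) := by
  simpa using GaussianFourier.integrable_cexp_neg_mul_sq_norm_add (V := V)
    (b := ((c⁻¹ : ℝ) : ℂ)) (by simpa) 0 0

lemma tendsto_integral_gaussian_smul_fourier [CompleteSpace E] {f : V → E} (hf : Integrable f)
    (h₀ : ContinuousAt f 0) :
    Tendsto (fun c : ℝ => ∫ t : V, Complex.exp (-(c⁻¹ : ℝ) * ‖t‖ ^ 2) • 𝓕 f t) atTop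
      (nhds (f 0)) := by
  refine (Real.tendsto_integral_gaussian_smul' hf h₀).congr' ?_
  filter_upwards [Ioi_mem_atTop 0] with c (hc : 0 < c)
  rw [← integral_fourier_smul_eq_flip (integrable_cexp_neg_inv_mul_sq_norm hc) hf]
  congr with x
  rw [fourier_gaussian_innerProductSpace (by simpa)]
  congr 2
  · simp
  · congr 1
    simp only [Complex.ofReal_inv, div_inv_eq_mul, zero_sub, norm_neg]
    ring

lemma re_integral_gaussian_smul_mono {g h : V → ℂ} {c : ℝ}
    (hg : Integrable fun t => Complex.exp (-(c⁻¹ : ℝ) * ‖t‖ ^ 2) • g t)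
    (hh : Integrable fun t => Complex.exp (-(c⁻¹ : ℝ) * ‖t‖ ^ 2) • h t)
    (hle : ∀ t, (g t).re ≤ (h t).re) :
    (∫ t : V, Complex.exp (-(c⁻¹ : ℝ) * ‖t‖ ^ 2) • g t).re ≤
      (∫ t : V, Complex.exp (-(c⁻¹ : ℝ) * ‖t‖ ^ 2) • h t).re := by
  rw [← RCLike.re_eq_complex_re, ← integral_re hg, ← integral_re hh]
  refine integral_mono hg.re hh.re fun t => ?_
  simp only [RCLike.re_eq_complex_re, cexp_neg_inv_mul_sq_eq_ofReal, smul_eq_mul,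
    Complex.re_ofReal_mul]
  exact mul_le_mul_of_nonneg_left (hle t) (Real.exp_pos _).le

/-- Replacing `𝓕 f` by `w * 𝓕 f` makes it integrable at the price of an increase of its real
part, so Fourier inversion at `0` becomes an inequality. -/
lemma re_apply_zero_le_re_integral_mul_fourier {f w : V → ℂ} (hf : Integrable f)
    (h₀ : ContinuousAt f 0) (hw : Integrable w)
    (hle : ∀ t, (𝓕 f t).re ≤ (w t * 𝓕 f t).re) :
    (f 0).re ≤ (∫ x, f x * 𝓕 w x).re := by
  have hwf := integrable_mul_fourier hf hw
  have hlim : Tendsto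
      (fun c : ℝ => (∫ t : V, Complex.exp (-(c⁻¹ : ℝ) * ‖t‖ ^ 2) • (w t * 𝓕 f t)).re)
      atTop (nhds (∫ t, w t * 𝓕 f t).re) :=
    (Complex.continuous_re.tendsto _).comp (Real.tendsto_integral_cexp_sq_smul hwf)
  have hlim₀ : Tendsto
      (fun c : ℝ => (∫ t : V, Complex.exp (-(c⁻¹ : ℝ) * ‖t‖ ^ 2) • 𝓕 f t).re)
      atTop (nhds (f 0).re) :=
    (Complex.continuous_re.tendsto _).comp (tendsto_integral_gaussian_smul_fourier hf h₀)
  have hflip : ∫ t, w t * 𝓕 f t = ∫ x, f x * 𝓕 w x := by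
    simpa only [smul_eq_mul, mul_comm] using integral_fourier_smul_eq_flip hf hw
  rw [← hflip]
  refine le_of_tendsto_of_tendsto hlim₀ hlim ?_
  filter_upwards [Ioi_mem_atTop 0] with c (hc : 0 < c)
  refine re_integral_gaussian_smul_mono ?_ ?_ hle
  · exact integrable_mul_fourier hf (integrable_cexp_neg_inv_mul_sq_norm hc)
  · refine hwf.bdd_mul (c := 1)
      (integrable_cexp_neg_inv_mul_sq_norm hc).aestronglyMeasurable (ae_of_all _ fun t => ?_)
    rw [cexp_neg_inv_mul_sq_eq_ofReal, Complex.norm_real, Real.norm_eq_abs, Real.abs_exp,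
      Real.exp_le_one_iff, neg_mul]
    exact neg_nonpos.2 (by positivity)

end Fourier

section StepWeight

lemma integrable_indicator_Icc_const (a b : ℝ) (z : ℂ) :
    Integrable ((Set.Icc a b).indicator fun _ => z) :=
  (integrable_indicator_iff measurableSet_Icc).2 (integrableOn_const measure_Icc_lt_top.ne)

lemma fourier_indicator_Icc {a : ℝ} (ha : 0 < a) (x : ℝ) :
    𝓕 ((Set.Icc (-a) a).indicator fun _ => (1 : ℂ)) x =
      (2 * a * Real.sinc (2 * π * a * x) : ℝ) := by
  calc 𝓕 ((Set.Icc (-a) a).indicator fun _ => (1 : ℂ)) x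
      = ∫ t in -a..a, charFun (Measure.dirac (-(2 * π * x))) t := by
        rw [Real.fourier_real_eq_integral_exp_smul,
          intervalIntegral.integral_of_le (by linarith), ← integral_Icc_eq_integral_Ioc,
          ← integral_indicator measurableSet_Icc]
        congr with t
        by_cases ht : t ∈ Set.Icc (-a) a
        · simp [ht, charFun_dirac, mul_comm, mul_left_comm]
        · simp [ht]
    _ = (2 * a * Real.sinc (2 * π * a * x) : ℝ) := by
        rw [integral_charFun_Icc ha, integral_dirac, mul_neg, Real.sinc_neg,
          show a * (2 * π * x) = 2 * π * a * x by ring]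
        push_cast
        rfl

lemma integrable_stepWeight : Integrable stepWeight :=
  ((integrable_indicator_Icc_const _ _ _).smul _).add
    ((integrable_indicator_Icc_const _ _ _).smul _)

lemma fourier_stepWeight (x : ℝ) :
    𝓕 stepWeight x =
      (2 * Real.sinc (2 * π * x) * (9 / 10 + 1 / 5 * Real.cos (2 * π * x)) : ℝ) := by
  rw [stepWeight, fourier_add_of_integrable ((integrable_indicator_Icc_const _ _ _).smul _)
    ((integrable_indicator_Icc_const _ _ _).smul _), fourier_const_smul, fourier_const_smul,
    Pi.add_apply, Pi.smul_apply, Pi.smul_apply,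
    fourier_indicator_Icc one_pos, fourier_indicator_Icc two_pos,
    show 2 * π * 2 * x = 2 * (2 * π * x) by ring, sinc_two_mul]
  push_cast
  ring_nf

lemma re_le_re_stepWeight_mul {t : ℝ} {z : ℂ} (h : 1 ≤ |t| → z.re ≤ 0) :
    z.re ≤ (stepWeight t * z).re := by
  by_cases h₁ : t ∈ Set.Icc (-1) 1
  · have h₂ : t ∈ Set.Icc (-2) 2 := Set.Icc_subset_Icc (by norm_num) (by norm_num) h₁
    have hweight : stepWeight t = 1 := by norm_num [stepWeight, h₁, h₂]
    rw [hweight, one_mul]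
  · have hz : z.re ≤ 0 := h (le_of_not_ge fun ht => h₁ (abs_le.1 ht))
    by_cases h₂ : t ∈ Set.Icc (-2) 2
    · have hweight : stepWeight t = (1 / 10 : ℝ) := by simp [stepWeight, h₁, h₂]
      rw [hweight, Complex.re_ofReal_mul]
      linarith
    · have hweight : stepWeight t = 0 := by simp [stepWeight, h₁, h₂]
      rwa [hweight, zero_mul, Complex.zero_re]

lemma fourier_add_fourier_neg {f : ℝ → ℂ} (hf : Integrable f) (t : ℝ) :
    𝓕 f t + 𝓕 f (-t) = ∫ x, f x * (2 * Real.cos (2 * π * t * x) : ℝ) := by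
  have hexp (s : ℝ) :
      Integrable fun x : ℝ => Complex.exp (↑(-2 * π * x * s) * Complex.I) • f x := by
    simpa [Circle.smul_def, Real.fourierChar_apply, mul_assoc, mul_left_comm] using!
      (Real.fourierIntegral_convergent_iff s).2 hf
  rw [Real.fourier_real_eq_integral_exp_smul, Real.fourier_real_eq_integral_exp_smul,
    ← integral_add (hexp t) (hexp (-t))]
  congr with x
  push_cast
  rw [Complex.two_cos, smul_eq_mul, smul_eq_mul]
  ring_nf

end StepWeight

theorem CcalPlusInf_lt_general {f : ℝ → ℂ} (hf : Integrable f) (h₀ : ContinuousAt f 0)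
    (hneg : ∀ t : ℝ, 1 ≤ |t| → (𝓕 f t).re ≤ 0) : (f 0).re ≤ 119 / 100 * ∫ x, ‖f x‖ := by
  have hstep : Integrable fun x => f x * 𝓕 stepWeight x :=
    integrable_mul_fourier integrable_stepWeight hf
  have hcos : Integrable fun x => f x * (2 * Real.cos (2 * π * 1 * x) : ℝ) := by
    refine hf.mul_bdd (c := 2) (by fun_prop) (ae_of_all _ fun x => ?_)
    rw [Complex.norm_real, norm_mul, Real.norm_two]
    exact mul_le_of_le_one_right two_pos.le (Real.abs_cos_le_one _)
  calc (f 0).re ≤ (∫ x, f x * 𝓕 stepWeight x).re :=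
        re_apply_zero_le_re_integral_mul_fourier hf h₀ integrable_stepWeight fun t =>
          re_le_re_stepWeight_mul (hneg t)
    _ ≤ ((∫ x, f x * 𝓕 stepWeight x) - (51 / 100 : ℝ) * (𝓕 f 1 + 𝓕 f (-1))).re := by
        rw [Complex.sub_re, Complex.re_ofReal_mul, Complex.add_re]
        linarith [hneg 1 (by simp), hneg (-1) (by simp)]
    _ = (∫ x, f x * dualKernel (2 * π * x)).re := by
        rw [fourier_add_fourier_neg hf, ← integral_const_mul,
          ← integral_sub hstep (hcos.const_mul _)]
        congr 2 with x
        rw [fourier_stepWeight, dualKernel]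
        push_cast
        ring_nf
    _ ≤ ‖∫ x, f x * dualKernel (2 * π * x)‖ := Complex.re_le_norm _
    _ ≤ ∫ x, 119 / 100 * ‖f x‖ := by
        refine norm_integral_le_of_norm_le (hf.norm.const_mul _) (ae_of_all _ fun x => ?_)
        rw [norm_mul, mul_comm, Complex.norm_real]
        exact mul_le_mul_of_nonneg_right (abs_dualKernel_le _) (norm_nonneg _)
    _ = 119 / 100 * ∫ x, ‖f x‖ := integral_const_mul _ _

lemma CcalPlusInf_le_of_forall {K : ℝ} (hK : 0 ≤ K)
    (h : ∀ F : ℝ → ℝ, Continuous F → Integrable F → (∀ x, F (-x) = F x) →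
      (∀ t : ℝ, 1 ≤ |t| → FTr F t ≤ 0) → F 0 ≤ K * ∫ x : ℝ, |F x|) :
    CcalPlusInf ≤ K := by
  refine Real.sSup_le ?_ hK
  rintro _ ⟨F, hcont, hF, -, heven, hneg, rfl⟩
  exact div_le_of_le_mul₀ (integral_nonneg fun _ => abs_nonneg _) hK (h F hcont hF heven hneg)

/-- 𝒞⁺(∞) < 6/5: there is K < 6/5 bounding F(0) ≤ K‖F‖₁ for all F ∈ ℰ⁺. -/
theorem CcalPlusInf_lt :
    CcalPlusInf < 6 / 5 ∧
    ∃ K : ℝ, K < 6 / 5 ∧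
      ∀ F : ℝ → ℝ, Continuous F → Integrable F → (∀ x, F (-x) = F x) →
        (∀ t : ℝ, 1 ≤ |t| → FTr F t ≤ 0) → F 0 ≤ K * ∫ x : ℝ, |F x| := by
  have hbound (F : ℝ → ℝ) (hcont : Continuous F) (hF : Integrable F) (_ : ∀ x, F (-x) = F x)
      (hneg : ∀ t : ℝ, 1 ≤ |t| → FTr F t ≤ 0) : F 0 ≤ 119 / 100 * ∫ x : ℝ, |F x| := by
    simpa using CcalPlusInf_lt_general hF.ofReal (Complex.continuous_ofReal.comp hcont).continuousAt
      hneg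
  have hK : (119 / 100 : ℝ) < 6 / 5 := by norm_num
  exact ⟨(CcalPlusInf_le_of_forall (by norm_num) hbound).trans_lt hK, _, hK, hbound⟩
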